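/- Let F be an algebraically closed field of characteristic zero, V ≠ 0 a finite-dimensional F-vector space, and M an automorphism of V. Suppose V = V₁ ⊕ ⋯ ⊕ V_q with each V_i M-stable and the restriction of M to V_i a single Jordan block of size m_i with eigenvalue ξ_i ∈ F× (i.e. (M|_{V_i} − ξ_i·id)^{m_i} = 0 and (M|_{V_i} − ξ_i·id)^{m_i−1} ≠ 0, dim V_i = m_i). Fix an integer j > 0, and let 𝒮 be the set of tuples s ∈ ℕ^q with s₁ + ⋯ + s_q = j and s_i ≤ m_i for all i. For ζ ∈ F, let max_ζ denote the smallest k ∈ ℕ such that ker((∧^j M − ζ·id)^{k+1}) = ker((∧^j M − ζ·id)^k) (this is the maximal rank of a Jordan block of ∧^j M with eigenvalue ζ, and equals 0 if ζ is not an eigenvalue of ∧^j M). Then for every ζ ∈ F, max_ζ = max{ 1 + Σ_{i=1}^{q} s_i(m_i − s_i) : s ∈ 𝒮 and ∏_{i=1}^{q} ξ_i^{s_i} = ζ }, with the convention max ∅ = 0. -/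

import Mathlib

/-- The wedge `v₁ ∧ ⋯ ∧ v_j`, as an element of the `j`-th exterior power `⋀[F]^j V`. -/
def wedge (F : Type*) {V : Type*} [Field F] [AddCommGroup V] [Module F V] (j : ℕ)
    (v : Fin j → V) : ⋀[F]^j V :=
  ⟨ExteriorAlgebra.ιMulti F j v, ExteriorAlgebra.ιMulti_range F j (Set.mem_range_self v)⟩

open exteriorPower

/-- wedge of vectors with `A` applied in slot `l`. -/
lemma JB_d_aux {F V : Type*} [Field F] [AddCommGroup V] [Module F V] {j : ℕ} (A : V →ₗ[F] V)
    (v : Fin j → V) (l : Fin j) :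
    (fun k => (if k = l then A else LinearMap.id) (v k)) = Function.update v l (A (v l)) := by
  ext k
  by_cases h : k = l
  · subst h; simp
  · simp [h]

/-- The multilinear map underlying the derivation extension. -/
noncomputable def JBdm {F V : Type*} [Field F] [AddCommGroup V] [Module F V] (j : ℕ)
    (A : V →ₗ[F] V) : MultilinearMap F (fun _ : Fin j => V) (⋀[F]^j V) :=
  ∑ l : Fin j, (ιMulti F j (M := V)).toMultilinearMap.compLinearMap
    (fun k => if k = l then A else LinearMap.id)

lemma JBdm_apply {F V : Type*} [Field F] [AddCommGroup V] [Module F V] (j : ℕ)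
    (A : V →ₗ[F] V) (v : Fin j → V) :
    JBdm j A v = ∑ l, ιMulti F j (Function.update v l (A (v l))) := by
  simp only [JBdm, sum_apply, MultilinearMap.compLinearMap_apply, JB_d_aux]
  rfl

/-- The alternating map underlying the derivation extension. -/
noncomputable def JBda {F V : Type*} [Field F] [AddCommGroup V] [Module F V] (j : ℕ)
    (A : V →ₗ[F] V) : V [⋀^Fin j]→ₗ[F] (⋀[F]^j V) :=
  { JBdm j A with
    map_eq_zero_of_eq' := by
      intro v i k hv hik
      change JBdm j A v = 0
      rw [JBdm_apply, ← Finset.add_sum_erase _ _ (Finset.mem_univ i),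
        ← Finset.add_sum_erase _ _ (Finset.mem_erase.2 ⟨hik.symm, Finset.mem_univ k⟩)]
      rw [Finset.sum_eq_zero, add_zero]
      · have : Function.update v k (A (v k)) =
            (Function.update v i (A (v i))) ∘ Equiv.swap i k := by
          ext l
          by_cases h1 : l = i
          · subst h1; simp [Function.update_of_ne hik, hv, Function.update_of_ne hik.symm]
          · by_cases h2 : l = k
            · subst h2; simp [hv]
            · simp [Equiv.swap_apply_of_ne_of_ne h1 h2, Function.update_of_ne h1,
                Function.update_of_ne h2]
        rw [this, AlternatingMap.map_swap _ _ hik, add_neg_cancel]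
      · intro l hl
        simp only [Finset.mem_erase, Finset.mem_univ, and_true] at hl
        apply AlternatingMap.map_eq_zero_of_eq _ _ (i := i) (j := k) _ hik
        rw [Function.update_of_ne hl.2.symm, Function.update_of_ne hl.1.symm, hv] }

/-- The derivation extension of an endomorphism to the exterior power. -/
noncomputable def JBd {F V : Type*} [Field F] [AddCommGroup V] [Module F V] (j : ℕ)
    (A : V →ₗ[F] V) : ⋀[F]^j V →ₗ[F] ⋀[F]^j V := alternatingMapLinearEquiv (JBda j A)

lemma JBd_apply {F V : Type*} [Field F] [AddCommGroup V] [Module F V] (j : ℕ)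
    (A : V →ₗ[F] V) (v : Fin j → V) :
    JBd j A (ιMulti F j v) = ∑ l, ιMulti F j (Function.update v l (A (v l))) := by
  rw [JBd, alternatingMapLinearEquiv_apply_ιMulti]
  exact JBdm_apply j A v

lemma JBd_comm {F V : Type*} [Field F] [AddCommGroup V] [Module F V] (j : ℕ)
    (A B C : V →ₗ[F] V) (h : ∀ x, A (B x) - B (A x) = C x) (y : ⋀[F]^j V) :
    JBd j A (JBd j B y) - JBd j B (JBd j A y) = JBd j C y := by
  suffices JBd j A ∘ₗ JBd j B - JBd j B ∘ₗ JBd j A = JBd j C by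
    rw [← this]; rfl
  apply exteriorPower.linearMap_ext
  ext1 v
  simp only [LinearMap.compAlternatingMap_apply, LinearMap.sub_apply, LinearMap.comp_apply,
    JBd_apply, map_sum]
  nth_rewrite 2 [Finset.sum_comm]
  rw [← Finset.sum_sub_distrib]
  apply Finset.sum_congr rfl
  intro l _
  rw [← Finset.sum_sub_distrib, Finset.sum_eq_single l]
  · simp only [Function.update_self, Function.update_idem]
    rw [← AlternatingMap.map_update_sub, h]
  · intro k _ hk
    rw [Function.update_of_ne hk, Function.update_of_ne hk.symm, Function.update_comm hk, sub_self]
  · simp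

/-- Abstract `sl₂` string computation. -/
lemma JB_sl2 {F W : Type*} [Field F] [CharZero F] [AddCommGroup W] [Module F W]
    (e f h : W →ₗ[F] W) (hef : ∀ y, e (f y) - f (e y) = h y)
    (hhf : ∀ y, h (f y) - f (h y) = (-2 : F) • f y)
    (v : W) (hv : v ≠ 0) (K : ℕ) (he : e v = 0) (hh : h v = (K : F) • v) :
    ∀ k ≤ K, (f ^ k) v ≠ 0 := by
  have h1 : ∀ k : ℕ, h ((f ^ k) v) = ((K : F) - 2 * k) • (f ^ k) v := by
    intro k
    induction k with
    | zero => simp [hh]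
    | succ k ih =>
      have := hhf ((f ^ k) v)
      rw [ih, sub_eq_iff_eq_add] at this
      rw [pow_succ', Module.End.mul_apply, this, map_smul, ← add_smul]
      congr 1; push_cast; ring
  have h2 : ∀ k : ℕ, e ((f ^ (k+1)) v) = (((k : F) + 1) * (K - k)) • (f ^ k) v := by
    intro k
    induction k with
    | zero =>
      have := hef v
      simp only [he, map_zero, sub_zero] at this
      simp [this, hh]
    | succ k ih =>
      have := hef ((f ^ (k+1)) v)
      have h4 : f ((f ^ k) v) = (f ^ (k+1)) v := by rw [pow_succ', Module.End.mul_apply]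
      rw [ih, sub_eq_iff_eq_add, h1, map_smul, h4, ← add_smul] at this
      rw [pow_succ' f (k+1), Module.End.mul_apply, this]
      congr 1; push_cast; ring
  intro k
  induction k with
  | zero => intro _; simpa using hv
  | succ k ih =>
    intro hk h0
    have := h2 k
    rw [h0, map_zero] at this
    have h3 := smul_eq_zero.1 this.symm
    rcases h3 with h3 | h3
    · have a1 : (k : F) + 1 ≠ 0 := by exact_mod_cast Nat.succ_ne_zero k
      have a2 : (K : F) - k ≠ 0 := by
        rw [sub_ne_zero]; exact_mod_cast (by omega : K ≠ k)
      exact (mul_ne_zero a1 a2) h3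
    · exact ih (by omega) h3

lemma JB_wedge_ne_zero {F V : Type*} [Field F] [AddCommGroup V] [Module F V] (j : ℕ)
    (v : Fin j → V) (hv : LinearIndependent F v) : ιMulti F j v ≠ 0 := by
  have h := (ιMulti_family_linearIndependent_field j hv).ne_zero
    (Set.powersetCard.ofFinEmbEquiv (RelEmbedding.refl _))
  simpa [ιMulti_family] using h

/-- Combinatorial bound -/
lemma JB_sum_lower (A : Finset ℕ) : (A.card : ℤ) * (A.card - 1) ≤ ∑ a ∈ A, 2 * (a : ℤ) := by
  induction A using Finset.induction_on_max with
  | empty => simp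
  | insert a s ha ih =>
    have hn : a ∉ s := fun h => lt_irrefl _ (ha a h)
    rw [Finset.sum_insert hn, Finset.card_insert_of_notMem hn]
    have : s.card ≤ a := by
      calc s.card ≤ (Finset.range a).card := Finset.card_le_card
            (fun x hx => Finset.mem_range.2 (ha x hx))
        _ = a := by simp
    push_cast
    zify at this
    nlinarith

lemma JB_abs_bound (A : Finset ℕ) (m : ℕ) (hA : ∀ a ∈ A, a < m) :
    A.card ≤ m ∧ |∑ a ∈ A, ((m : ℤ) - 1 - 2 * a)| ≤ ((A.card * (m - A.card) : ℕ) : ℤ) := by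
  have hc : A.card ≤ m := by
      calc A.card ≤ (Finset.range m).card := Finset.card_le_card
            (fun x hx => Finset.mem_range.2 (hA x hx))
        _ = m := by simp
  refine ⟨hc, ?_⟩
  have h1 := JB_sum_lower A
  have hinj : Set.InjOn (fun a => m - 1 - a) (A : Set ℕ) := by
    intro a ha b hb hab
    have := hA a ha
    have := hA b hb
    simp only at hab
    omega
  have h2 := JB_sum_lower (A.image (fun a => m - 1 - a))
  rw [Finset.card_image_of_injOn hinj, Finset.sum_image hinj] at h2
  have h3 : ∑ a ∈ A, 2 * ((m - 1 - a : ℕ) : ℤ) = ∑ a ∈ A, ((m:ℤ) - 1) * 2 - ∑ a ∈ A, 2 * (a:ℤ) := by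
    rw [← Finset.sum_sub_distrib]
    apply Finset.sum_congr rfl
    intro a ha
    have := hA a ha
    rw [Nat.sub_sub, Nat.cast_sub (by omega)]
    push_cast; ring
  rw [h3, Finset.sum_const, nsmul_eq_mul] at h2
  rw [Finset.sum_sub_distrib, Finset.sum_const, nsmul_eq_mul, abs_le]
  push_cast [Nat.cast_sub hc]
  constructor <;> nlinarith

lemma JB_chain_li {F V : Type*} [Field F] [AddCommGroup V] [Module F V] (N : V →ₗ[F] V) (x : V)
    (m : ℕ) (h0 : (N ^ m) x = 0) (h1 : (N ^ (m - 1)) x ≠ 0) :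
    LinearIndependent F (fun a : Fin m => (N ^ (a : ℕ)) x) := by
  have hz : ∀ a, m ≤ a → (N ^ a) x = 0 := by
    intro a ha
    obtain ⟨k, rfl⟩ := Nat.exists_eq_add_of_le ha
    rw [add_comm, pow_add, Module.End.mul_apply, h0, map_zero]
  rw [Fintype.linearIndependent_iff]
  intro g hg
  have key : ∀ n : ℕ, ∀ hn : n < m, g ⟨n, hn⟩ = 0 := by
    intro n
    induction n using Nat.strong_induction_on with
    | _ n ih =>
      intro hn
      have h2 := congrArg (N ^ (m - 1 - n)) hg
      rw [map_sum, map_zero, Finset.sum_eq_single ⟨n, hn⟩] at h2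
      · rw [map_smul, ← Module.End.mul_apply, ← pow_add] at h2
        have h3 : m - 1 - n + n = m - 1 := by omega
        simp only [h3] at h2
        exact (smul_eq_zero.1 h2).resolve_right h1
      · intro b _ hb
        have hb' : (b : ℕ) ≠ n := fun h => hb (Fin.ext h)
        rcases lt_or_gt_of_ne hb' with h | h
        · rw [show g b = 0 from ih b h b.2, zero_smul, map_zero]
        · rw [map_smul, ← Module.End.mul_apply, ← pow_add, hz _ (by omega), smul_zero]
      · simp
  intro i
  exact key i i.2

lemma JB_exists_chain
    (F V : Type*) [Field F]
    [AddCommGroup V] [Module F V] [FiniteDimensional F V]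
    (M : V →ₗ[F] V)
    (q : ℕ) (Vsub : Fin q → Submodule F V) (hdec : DirectSum.IsInternal Vsub)
    (m : Fin q → ℕ) (ξ : Fin q → F) (hξ : ∀ i, ξ i ≠ 0)
    (hdim : ∀ i, Module.finrank F (Vsub i) = m i)
    (hstab : ∀ i, ∀ x ∈ Vsub i, M x ∈ Vsub i)
    (hjb : ∀ i, ∀ x ∈ Vsub i, (((M - ξ i • LinearMap.id : V →ₗ[F] V)) ^ m i) x = 0)
    (hjb' : ∀ i, ∃ x ∈ Vsub i, (((M - ξ i • LinearMap.id : V →ₗ[F] V)) ^ (m i - 1)) x ≠ 0) :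
    ∃ (E : Fin q × ℕ → V) (b : Module.Basis (Σ i, Fin (m i)) F V),
      (∀ i a, M (E (i, a)) = ξ i • (E (i, a) + E (i, a + 1))) ∧
      (∀ i a, m i ≤ a → E (i, a) = 0) ∧ ∀ p, b p = E (p.1, p.2) := by
  choose x hx hx' using hjb'
  set N : Fin q → V →ₗ[F] V := fun i => (ξ i)⁻¹ • (M - ξ i • LinearMap.id) with hN
  have hNp : ∀ i k, (N i) ^ k = ((ξ i)⁻¹) ^ k • (M - ξ i • LinearMap.id : V →ₗ[F] V) ^ k := by
    intro i k; rw [hN]; exact smul_pow _ _ _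
  have hN0 : ∀ i a, m i ≤ a → ((N i) ^ a) (x i) = 0 := by
    intro i a ha
    obtain ⟨k, rfl⟩ := Nat.exists_eq_add_of_le ha
    rw [add_comm, pow_add, Module.End.mul_apply, hNp i (m i), LinearMap.smul_apply,
      hjb i _ (hx i), smul_zero, map_zero]
  have hmem : ∀ i a, ((N i) ^ a) (x i) ∈ Vsub i := by
    intro i a
    induction a with
    | zero => simpa using hx i
    | succ a ih =>
      rw [pow_succ', Module.End.mul_apply]
      simp only [hN, LinearMap.smul_apply, LinearMap.sub_apply, LinearMap.id_apply]
      exact (Vsub i).smul_mem _ ((Vsub i).sub_mem (hstab i _ ih) ((Vsub i).smul_mem _ ih))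
  have hli : ∀ i, LinearIndependent F (fun a : Fin (m i) => ((N i) ^ (a:ℕ)) (x i)) := by
    intro i
    apply JB_chain_li _ _ _ (hN0 i _ le_rfl)
    rw [hNp, LinearMap.smul_apply]
    exact smul_ne_zero (pow_ne_zero _ (inv_ne_zero (hξ i))) (hx' i)
  have hli' : ∀ i, LinearIndependent F
      (fun a : Fin (m i) => (⟨((N i) ^ (a:ℕ)) (x i), hmem i a⟩ : Vsub i)) := by
    intro i
    exact LinearIndependent.of_comp (Vsub i).subtype (hli i)
  have hmpos : ∀ i, 0 < m i := by
    intro i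
    by_contra h
    have h0 : m i = 0 := by omega
    have h1 := hjb i _ (hx i)
    have h2 := hx' i
    rw [h0] at h1 h2
    exact h2 h1
  have : ∀ i, Nonempty (Fin (m i)) := fun i => ⟨⟨0, hmpos i⟩⟩
  let B : ∀ i, Module.Basis (Fin (m i)) F (Vsub i) := fun i =>
    basisOfLinearIndependentOfCardEqFinrank (hli' i) (by simp [hdim])
  refine ⟨fun p => ((N p.1) ^ p.2) (x p.1), hdec.collectedBasis B, ?_, hN0, ?_⟩
  · intro i a
    simp only
    rw [pow_succ', Module.End.mul_apply]
    set y := ((N i) ^ a) (x i)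
    simp only [hN, LinearMap.smul_apply, LinearMap.sub_apply, LinearMap.id_apply]
    rw [smul_add, smul_smul, mul_inv_cancel₀ (hξ i), one_smul]
    abel
  · intro p
    rw [hdec.collectedBasis_coe]
    simp [B]

/-- weight -/
def JBw {q j : ℕ} (m : Fin q → ℕ) (c : Fin j → Fin q × ℕ) : ℤ :=
  ∑ l, ((m (c l).1 : ℤ) - 1 - 2 * ((c l).2 : ℤ))

/-- shift the second index outside `S` -/
def JBsh {q j : ℕ} (S : Finset (Fin j)) (c : Fin j → Fin q × ℕ) : Fin j → Fin q × ℕ :=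
  fun l => if l ∈ S then c l else ((c l).1, (c l).2 + 1)

lemma JBsh_fst {q j : ℕ} (S : Finset (Fin j)) (c : Fin j → Fin q × ℕ) (l : Fin j) :
    (JBsh S c l).1 = (c l).1 := by
  unfold JBsh; split_ifs <;> rfl

lemma JBw_sh {q j : ℕ} (m : Fin q → ℕ) (S : Finset (Fin j)) (c : Fin j → Fin q × ℕ) :
    JBw m (JBsh S c) = JBw m c - 2 * (Sᶜ.card : ℤ) := by
  have : 2 * (Sᶜ.card : ℤ) = ∑ l : Fin j, if l ∈ Sᶜ then (2 : ℤ) else 0 := by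
    rw [Finset.sum_ite_mem]; simp [mul_comm]
  rw [this, JBw, JBw, ← Finset.sum_sub_distrib]
  apply Finset.sum_congr rfl
  intro l _
  by_cases h : l ∈ S <;> simp [JBsh, h]
  ring

/-- The filtration. -/
def JBG {F V : Type*} [Field F] [AddCommGroup V] [Module F V] {q : ℕ} (j : ℕ)
    (m : Fin q → ℕ) (ξ : Fin q → F) (E : Fin q × ℕ → V) (ζ : F) (x : ℤ) :
    Submodule F (⋀[F]^j V) :=
  Submodule.span F {y | ∃ c : Fin j → Fin q × ℕ, (∏ l, ξ (c l).1) = ζ ∧ JBw m c ≤ x ∧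
    y = ιMulti F j (fun l => E (c l))}

lemma JB_mem_G {F V : Type*} [Field F] [AddCommGroup V] [Module F V] {q : ℕ} {j : ℕ}
    {m : Fin q → ℕ} {ξ : Fin q → F} {E : Fin q × ℕ → V} {ζ : F} {x : ℤ}
    (c : Fin j → Fin q × ℕ) (h1 : (∏ l, ξ (c l).1) = ζ) (h2 : JBw m c ≤ x) :
    ιMulti F j (fun l => E (c l)) ∈ JBG j m ξ E ζ x :=
  Submodule.subset_span ⟨c, h1, h2, rfl⟩

lemma JBG_mono {F V : Type*} [Field F] [AddCommGroup V] [Module F V] {q : ℕ} {j : ℕ}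
    {m : Fin q → ℕ} {ξ : Fin q → F} {E : Fin q × ℕ → V} {ζ : F} {x y : ℤ} (h : x ≤ y) :
    JBG j m ξ E ζ x ≤ JBG j m ξ E ζ y := by
  apply Submodule.span_mono
  rintro _ ⟨c, h1, h2, rfl⟩
  exact ⟨c, h1, h2.trans h, rfl⟩

lemma JB_map_G {F V : Type*} [Field F] [AddCommGroup V] [Module F V] {q : ℕ} {j : ℕ}
    {m : Fin q → ℕ} {ξ : Fin q → F} {E : Fin q × ℕ → V} {ζ : F} (T : ⋀[F]^j V →ₗ[F] ⋀[F]^j V)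
    (x y : ℤ) (h : ∀ c : Fin j → Fin q × ℕ, (∏ l, ξ (c l).1) = ζ → JBw m c ≤ x →
      T (ιMulti F j (fun l => E (c l))) ∈ JBG j m ξ E ζ y) :
    ∀ z ∈ JBG j m ξ E ζ x, T z ∈ JBG j m ξ E ζ y := by
  suffices JBG j m ξ E ζ x ≤ (JBG j m ξ E ζ y).comap T from fun z hz => this hz
  apply Submodule.span_le.2
  rintro _ ⟨c, h1, h2, rfl⟩
  exact h c h1 h2

lemma JB_expand {F V : Type*} [Field F] [AddCommGroup V] [Module F V] {q : ℕ} {j : ℕ}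
    {ξ : Fin q → F} {E : Fin q × ℕ → V} (M : V →ₗ[F] V)
    (hE : ∀ i a, M (E (i, a)) = ξ i • (E (i, a) + E (i, a + 1)))
    (Mj : ⋀[F]^j V →ₗ[F] ⋀[F]^j V)
    (hMj : ∀ v : Fin j → V, Mj (ιMulti F j v) = ιMulti F j fun k => M (v k))
    (c : Fin j → Fin q × ℕ) :
    Mj (ιMulti F j (fun l => E (c l))) =
      (∏ l, ξ (c l).1) • ∑ S : Finset (Fin j), ιMulti F j (fun l => E (JBsh S c l)) := by
  rw [hMj]
  have h1 : (fun k => M (E (c k))) = fun k => ξ (c k).1 •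
      ((fun l => E (c l)) + (fun l => E ((c l).1, (c l).2 + 1))) k := by
    ext k; exact hE (c k).1 (c k).2
  rw [h1, AlternatingMap.map_smul_univ, AlternatingMap.map_add_univ]
  congr 1
  apply Finset.sum_congr rfl
  intro S _
  congr 1
  ext l
  by_cases h : l ∈ S <;> simp [JBsh, h]

lemma JB_df {F V : Type*} [Field F] [AddCommGroup V] [Module F V] {q : ℕ} {j : ℕ}
    {E : Fin q × ℕ → V} (f : V →ₗ[F] V)
    (hf : ∀ i a, f (E (i, a)) = E (i, a + 1))
    (c : Fin j → Fin q × ℕ) :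
    JBd j f (ιMulti F j (fun l => E (c l))) =
      ∑ k : Fin j, ιMulti F j (fun l => E (JBsh ({k}ᶜ) c l)) := by
  rw [JBd_apply]
  apply Finset.sum_congr rfl
  intro k _
  congr 1
  ext l
  by_cases h : l = k
  · subst h; simp [JBsh]; exact hf _ _
  · simp [JBsh, h]

lemma JB_df_G {F V : Type*} [Field F] [AddCommGroup V] [Module F V] {q : ℕ} {j : ℕ}
    {m : Fin q → ℕ} {ξ : Fin q → F} {ζ : F}
    {E : Fin q × ℕ → V} (f : V →ₗ[F] V)
    (hf : ∀ i a, f (E (i, a)) = E (i, a + 1)) (x : ℤ) :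
    ∀ z ∈ JBG j m ξ E ζ x, JBd j f z ∈ JBG j m ξ E ζ (x - 2) := by
  apply JB_map_G
  intro c h1 h2
  rw [JB_df f hf]
  apply Submodule.sum_mem
  intro k _
  apply JB_mem_G
  · simp only [JBsh_fst, h1]
  · rw [JBw_sh]; simp; exact h2

lemma JB_T_G {F V : Type*} [Field F] [AddCommGroup V] [Module F V] {q : ℕ} {j : ℕ}
    {m : Fin q → ℕ} {ξ : Fin q → F} {E : Fin q × ℕ → V} (M : V →ₗ[F] V)
    (hE : ∀ i a, M (E (i, a)) = ξ i • (E (i, a) + E (i, a + 1)))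
    (Mj : ⋀[F]^j V →ₗ[F] ⋀[F]^j V)
    (hMj : ∀ v : Fin j → V, Mj (ιMulti F j v) = ιMulti F j fun k => M (v k)) (ζ : F) (x : ℤ) :
    ∀ z ∈ JBG j m ξ E ζ x, (Mj - ζ • LinearMap.id : ⋀[F]^j V →ₗ[F] ⋀[F]^j V) z ∈ JBG j m ξ E ζ (x - 2) := by
  apply JB_map_G
  intro c h1 h2
  rw [LinearMap.sub_apply, JB_expand M hE Mj hMj, h1, LinearMap.smul_apply, LinearMap.id_apply,
    ← Finset.add_sum_erase _ _ (Finset.mem_univ Finset.univ)]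
  have : (fun l => E (JBsh Finset.univ c l)) = fun l => E (c l) := by
    ext l; simp [JBsh]
  rw [this, smul_add, add_sub_cancel_left]
  apply Submodule.smul_mem
  apply Submodule.sum_mem
  intro S hS
  apply JB_mem_G
  · simp only [JBsh_fst, h1]
  · rw [JBw_sh]
    have : 0 < Sᶜ.card := by
      rw [Finset.card_pos, Finset.nonempty_iff_ne_empty]
      simpa using hS
    omega

lemma JB_Tf_G {F V : Type*} [Field F] [AddCommGroup V] [Module F V] {q : ℕ} {j : ℕ}
    {m : Fin q → ℕ} {ξ : Fin q → F} {E : Fin q × ℕ → V} (M : V →ₗ[F] V)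
    (hE : ∀ i a, M (E (i, a)) = ξ i • (E (i, a) + E (i, a + 1)))
    (f : V →ₗ[F] V) (hf : ∀ i a, f (E (i, a)) = E (i, a + 1))
    (Mj : ⋀[F]^j V →ₗ[F] ⋀[F]^j V)
    (hMj : ∀ v : Fin j → V, Mj (ιMulti F j v) = ιMulti F j fun k => M (v k)) (ζ : F) (x : ℤ) :
    ∀ z ∈ JBG j m ξ E ζ x, ((Mj - ζ • LinearMap.id) - ζ • JBd j f : ⋀[F]^j V →ₗ[F] ⋀[F]^j V) z ∈
      JBG j m ξ E ζ (x - 4) := by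
  apply JB_map_G
  intro c h1 h2
  have hinj : Function.Injective (fun k : Fin j => ({k}ᶜ : Finset (Fin j))) := by
    intro a b h
    simpa using h
  have hd : ∑ k : Fin j, ιMulti F j (fun l => E (JBsh ({k}ᶜ) c l)) =
      ∑ S ∈ Finset.univ.image (fun k : Fin j => ({k}ᶜ : Finset (Fin j))),
        ιMulti F j (fun l => E (JBsh S c l)) := by
    rw [Finset.sum_image (fun a _ b _ h => hinj h)]
  rw [LinearMap.sub_apply, LinearMap.sub_apply, JB_expand M hE Mj hMj, h1, LinearMap.smul_apply,
    LinearMap.smul_apply, LinearMap.id_apply, JB_df f hf, hd,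
    ← Finset.add_sum_erase _ _ (Finset.mem_univ Finset.univ)]
  have : (fun l => E (JBsh Finset.univ c l)) = fun l => E (c l) := by
    ext l; simp [JBsh]
  rw [this, smul_add, add_sub_cancel_left, ← smul_sub]
  have hsub : Finset.univ.image (fun k : Fin j => ({k}ᶜ : Finset (Fin j))) ⊆
      Finset.univ.erase Finset.univ := by
    intro S hS
    simp only [Finset.mem_image, Finset.mem_univ, true_and] at hS
    obtain ⟨k, rfl⟩ := hS
    simp
  rw [← Finset.sum_sdiff hsub, add_sub_cancel_right]
  apply Submodule.smul_mem
  apply Submodule.sum_mem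
  intro S hS
  apply JB_mem_G
  · simp only [JBsh_fst, h1]
  · rw [JBw_sh]
    simp only [Finset.mem_sdiff, Finset.mem_erase, Finset.mem_univ, and_true, Finset.mem_image,
      true_and, not_exists] at hS
    have h0 : Sᶜ.card ≠ 0 := by
      rw [Finset.card_ne_zero, Finset.nonempty_iff_ne_empty]
      simpa using hS.1
    have h1 : Sᶜ.card ≠ 1 := by
      intro h
      obtain ⟨k, hk⟩ := Finset.card_eq_one.1 h
      exact hS.2 k (by rw [← hk, compl_compl])
    omega

/-- The set of the statement. -/
def JBset {F : Type*} [Field F] {q : ℕ} (j : ℕ) (m : Fin q → ℕ) (ξ : Fin q → F) (ζ : F) : Set ℕ :=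
  {n : ℕ | ∃ s : Fin q → ℕ, (∀ i, s i ≤ m i) ∧ (∑ i, s i) = j ∧
      (∏ i, ξ i ^ s i) = ζ ∧ n = 1 + ∑ i, s i * (m i - s i)}

lemma JBset_bdd {F : Type*} [Field F] {q : ℕ} (j : ℕ) (m : Fin q → ℕ) (ξ : Fin q → F) (ζ : F) :
    BddAbove (JBset j m ξ ζ) := by
  refine ⟨1 + ∑ i, m i * m i, ?_⟩
  rintro n ⟨s, h1, -, -, rfl⟩
  gcongr with i
  · exact h1 i
  · omega

lemma JB_bound {F : Type*} [Field F] {q : ℕ} {j : ℕ} (m : Fin q → ℕ) (ξ : Fin q → F)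
    (c : Fin j → Fin q × ℕ) (hc : Function.Injective c) (hcm : ∀ l, (c l).2 < m (c l).1) :
    |JBw m c| + 1 ≤ (sSup (JBset j m ξ (∏ l, ξ (c l).1)) : ℕ) := by
  classical
  set A : Fin q → Finset ℕ := fun i => (Finset.univ.filter (fun l => (c l).1 = i)).image
    (fun l => (c l).2) with hA
  have hinj : ∀ i, Set.InjOn (fun l => (c l).2)
      ((Finset.univ.filter (fun l => (c l).1 = i) : Finset (Fin j)) : Set (Fin j)) := by
    intro i a ha b hb hab
    simp only [Finset.coe_filter, Finset.mem_univ, true_and, Set.mem_ofPred_eq] at ha hb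
    exact hc (Prod.ext (ha.trans hb.symm) hab)
  have hcard : ∀ i, (A i).card = (Finset.univ.filter (fun l => (c l).1 = i)).card := by
    intro i; exact Finset.card_image_of_injOn (hinj i)
  have hAb : ∀ i, _ := fun i => JB_abs_bound (A i) (m i) (by
    intro a ha
    simp only [hA, Finset.mem_image, Finset.mem_filter, Finset.mem_univ, true_and] at ha
    obtain ⟨l, rfl, rfl⟩ := ha
    exact hcm l)
  have hmem : 1 + ∑ i, (A i).card * (m i - (A i).card) ∈ JBset j m ξ (∏ l, ξ (c l).1) := by
    refine ⟨fun i => (A i).card, fun i => (hAb i).1, ?_, ?_, rfl⟩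
    · simp only [hcard]
      rw [← Finset.card_eq_sum_card_fiberwise (fun _ _ => Finset.mem_coe.2 (Finset.mem_univ _))]
      simp
    · simp only [hcard]
      rw [← Finset.prod_fiberwise Finset.univ (fun l => (c l).1)]
      apply Finset.prod_congr rfl
      intro i _
      rw [← Finset.prod_const]
      apply Finset.prod_congr rfl
      intro l hl
      rw [(Finset.mem_filter.1 hl).2]
  have h1 := le_csSup (JBset_bdd j m ξ _) hmem
  have h2 : JBw m c = ∑ i, ∑ a ∈ A i, ((m i : ℤ) - 1 - 2 * a) := by
    rw [JBw, ← Finset.sum_fiberwise Finset.univ (fun l => (c l).1)]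
    apply Finset.sum_congr rfl
    intro i _
    rw [hA, Finset.sum_image (hinj i)]
    apply Finset.sum_congr rfl
    intro l hl
    rw [(Finset.mem_filter.1 hl).2]
  have h3 : |JBw m c| ≤ ∑ i, (((A i).card * (m i - (A i).card) : ℕ) : ℤ) := by
    rw [h2]
    exact (Finset.abs_sum_le_sum_abs _ _).trans (Finset.sum_le_sum fun i _ => (hAb i).2)
  zify at h1
  push_cast at h1 h3 ⊢
  linarith

lemma JB_zero_or {F V : Type*} [Field F] [AddCommGroup V] [Module F V] {q : ℕ} {j : ℕ}
    {m : Fin q → ℕ} (ξ : Fin q → F) {E : Fin q × ℕ → V}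
    (hE0 : ∀ i a, m i ≤ a → E (i, a) = 0) (c : Fin j → Fin q × ℕ) :
    ιMulti F j (fun l => E (c l)) = 0 ∨
      |JBw m c| + 1 ≤ (sSup (JBset j m ξ (∏ l, ξ (c l).1)) : ℕ) := by
  by_cases hcm : ∀ l, (c l).2 < m (c l).1
  · by_cases hc : Function.Injective c
    · exact Or.inr (JB_bound m ξ c hc hcm)
    · left
      simp only [Function.Injective, not_forall] at hc
      obtain ⟨a, b, h1, h2⟩ := hc
      exact AlternatingMap.map_eq_zero_of_eq _ _ (by rw [h1]) h2
  · left
    push Not at hcm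
    obtain ⟨l, hl⟩ := hcm
    exact AlternatingMap.map_coord_zero _ l (hE0 _ _ hl)

lemma JBG_bot {F V : Type*} [Field F] [AddCommGroup V] [Module F V] {q : ℕ} {j : ℕ}
    {m : Fin q → ℕ} (ξ : Fin q → F) {E : Fin q × ℕ → V}
    (hE0 : ∀ i a, m i ≤ a → E (i, a) = 0) (ζ : F) (x : ℤ)
    (hx : x ≤ -(sSup (JBset j m ξ ζ) : ℕ)) : JBG j m ξ E ζ x = ⊥ := by
  rw [JBG, Submodule.span_eq_bot]
  rintro _ ⟨c, h1, h2, rfl⟩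
  rcases JB_zero_or (F := F) ξ hE0 c with h | h
  · exact h
  · rw [h1] at h
    have := neg_abs_le (JBw m c)
    omega

lemma JBG_top {F V : Type*} [Field F] [AddCommGroup V] [Module F V] {q : ℕ} {j : ℕ}
    {m : Fin q → ℕ} (ξ : Fin q → F) {E : Fin q × ℕ → V}
    (hE0 : ∀ i a, m i ≤ a → E (i, a) = 0) (c : Fin j → Fin q × ℕ) :
    ιMulti F j (fun l => E (c l)) ∈ JBG j m ξ E (∏ l, ξ (c l).1)
      ((sSup (JBset j m ξ (∏ l, ξ (c l).1)) : ℕ) - 1) := by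
  rcases JB_zero_or (F := F) ξ hE0 c with h | h
  · rw [h]; exact Submodule.zero_mem _
  · apply JB_mem_G c rfl
    have := le_abs_self (JBw m c)
    omega

lemma JBd_smul {F V : Type*} [Field F] [AddCommGroup V] [Module F V] (j : ℕ)
    (A B : V →ₗ[F] V) (r : F) (h : ∀ x, B x = r • A x) (y : ⋀[F]^j V) :
    JBd j B y = r • JBd j A y := by
  suffices JBd j B = r • JBd j A by rw [this]; rfl
  apply exteriorPower.linearMap_ext
  ext1 v
  simp only [LinearMap.compAlternatingMap_apply, LinearMap.smul_apply, JBd_apply, h,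
    Finset.smul_sum]
  apply Finset.sum_congr rfl
  intro l _
  rw [AlternatingMap.map_update_smul]

lemma JB_sl2_exists {F V : Type*} [Field F] [AddCommGroup V] [Module F V] {q : ℕ}
    {m : Fin q → ℕ} {E : Fin q × ℕ → V} (b : Module.Basis (Σ i, Fin (m i)) F V)
    (hE0 : ∀ i a, m i ≤ a → E (i, a) = 0) (hb : ∀ p, b p = E (p.1, p.2)) :
    ∃ e f h : V →ₗ[F] V, (∀ i a, f (E (i, a)) = E (i, a + 1)) ∧
      (∀ i a, e (E (i, a)) = ((a : F) * (m i - a)) • E (i, a - 1)) ∧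
      (∀ i a, h (E (i, a)) = ((m i : F) - 1 - 2 * a) • E (i, a)) ∧
      (∀ x, e (f x) - f (e x) = h x) ∧ (∀ x, h (f x) - f (h x) = ((-2 : F) • f) x) := by
  have gen : ∀ φ : Fin q → ℕ → V, (∀ i a, m i ≤ a → φ i a = 0) →
      ∃ g : V →ₗ[F] V, ∀ i a, g (E (i, a)) = φ i a := by
    intro φ hφ
    refine ⟨b.constr F (fun p => φ p.1 p.2), fun i a => ?_⟩
    by_cases ha : a < m i
    · have := b.constr_basis F (fun p => φ p.1 p.2) ⟨i, ⟨a, ha⟩⟩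
      rwa [hb] at this
    · push Not at ha
      rw [hE0 i a ha, hφ i a ha, map_zero]
  obtain ⟨f, hf⟩ := gen (fun i a => E (i, a + 1)) (fun i a h => hE0 _ _ (by omega))
  obtain ⟨e, he⟩ := gen (fun i a => ((a : F) * (m i - a)) • E (i, a - 1)) (by
    intro i a h
    rcases h.eq_or_lt with h | h
    · simp [h]
    · rw [hE0 _ _ (by omega), smul_zero])
  obtain ⟨h, hh⟩ := gen (fun i a => ((m i : F) - 1 - 2 * a) • E (i, a)) (by
    intro i a h
    rw [hE0 _ _ h, smul_zero])
  refine ⟨e, f, h, hf, he, hh, ?_, ?_⟩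
  · suffices e ∘ₗ f - f ∘ₗ e = h from fun x => by rw [← this]; rfl
    apply b.ext
    intro p
    rw [hb]
    obtain ⟨i, a⟩ := p
    simp only [LinearMap.sub_apply, LinearMap.comp_apply, hf, he, hh, map_smul]
    rcases Nat.eq_zero_or_pos (a : ℕ) with h0 | h0
    · rw [h0]; simp
    · rw [Nat.sub_add_cancel h0, Nat.add_sub_cancel, ← sub_smul]
      congr 1; push_cast; ring
  · suffices h ∘ₗ f - f ∘ₗ h = (-2 : F) • f from fun x => by rw [← this]; rfl
    apply b.ext
    intro p
    rw [hb]
    obtain ⟨i, a⟩ := p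
    simp only [LinearMap.sub_apply, LinearMap.comp_apply, hf, hh, map_smul, LinearMap.smul_apply]
    rw [← sub_smul]
    congr 1; push_cast; ring

lemma JB_pow_G {F V : Type*} [Field F] [AddCommGroup V] [Module F V] {q : ℕ} {j : ℕ}
    {m : Fin q → ℕ} {ξ : Fin q → F} {E : Fin q × ℕ → V} {ζ : F}
    (T : ⋀[F]^j V →ₗ[F] ⋀[F]^j V)
    (hT : ∀ x, ∀ z ∈ JBG j m ξ E ζ x, T z ∈ JBG j m ξ E ζ (x - 2)) (x : ℤ) (k : ℕ) :
    ∀ z ∈ JBG j m ξ E ζ x, (T ^ k) z ∈ JBG j m ξ E ζ (x - 2 * k) := by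
  intro z hz
  induction k with
  | zero => simpa using hz
  | succ k ih =>
    rw [pow_succ', Module.End.mul_apply]
    have := hT _ _ ih
    rwa [show x - 2 * ((k + 1 : ℕ) : ℤ) = x - 2 * k - 2 by push_cast; ring]

lemma JB_kill {F V : Type*} [Field F] [AddCommGroup V] [Module F V] {q : ℕ} {j : ℕ}
    {m : Fin q → ℕ} {ξ : Fin q → F} {E : Fin q × ℕ → V} (M : V →ₗ[F] V)
    (hE : ∀ i a, M (E (i, a)) = ξ i • (E (i, a) + E (i, a + 1)))
    (hE0 : ∀ i a, m i ≤ a → E (i, a) = 0)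
    (Mj : ⋀[F]^j V →ₗ[F] ⋀[F]^j V)
    (hMj : ∀ v : Fin j → V, Mj (ιMulti F j v) = ιMulti F j fun k => M (v k)) (ζ : F) :
    ∀ z ∈ JBG j m ξ E ζ ((sSup (JBset j m ξ ζ) : ℕ) - 1),
      ((Mj - ζ • LinearMap.id : ⋀[F]^j V →ₗ[F] ⋀[F]^j V) ^ (sSup (JBset j m ξ ζ))) z = 0 := by
  intro z hz
  have h := JB_pow_G _ (JB_T_G (m := m) M hE Mj hMj ζ) _ (sSup (JBset j m ξ ζ)) z hz
  rw [JBG_bot ξ hE0 ζ _ (by omega)] at h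
  exact (Submodule.mem_bot F).1 h

lemma JB_lower {F V : Type*} [Field F] [CharZero F] [AddCommGroup V] [Module F V] {q : ℕ} {j : ℕ}
    {m : Fin q → ℕ} {ξ : Fin q → F} (hξ : ∀ i, ξ i ≠ 0) {E : Fin q × ℕ → V} (M : V →ₗ[F] V)
    (b : Module.Basis (Σ i, Fin (m i)) F V)
    (hE : ∀ i a, M (E (i, a)) = ξ i • (E (i, a) + E (i, a + 1)))
    (hE0 : ∀ i a, m i ≤ a → E (i, a) = 0) (hb : ∀ p, b p = E (p.1, p.2))
    (Mj : ⋀[F]^j V →ₗ[F] ⋀[F]^j V)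
    (hMj : ∀ v : Fin j → V, Mj (ιMulti F j v) = ιMulti F j fun k => M (v k)) (ζ : F)
    (hne : (JBset j m ξ ζ).Nonempty) :
    ∃ (K : ℕ) (v : ⋀[F]^j V), sSup (JBset j m ξ ζ) = K + 1 ∧
      ((Mj - ζ • LinearMap.id : ⋀[F]^j V →ₗ[F] ⋀[F]^j V) ^ K) v ≠ 0 ∧
      ((Mj - ζ • LinearMap.id : ⋀[F]^j V →ₗ[F] ⋀[F]^j V) ^ (K + 1)) v = 0 := by
  obtain ⟨s, hs1, hs2, hs3, hs4⟩ := Nat.sSup_mem hne (JBset_bdd j m ξ ζ)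
  set K := ∑ i, s i * (m i - s i) with hK
  obtain ⟨e, f, h, hf, he, hh, hef, hhf⟩ := JB_sl2_exists b hE0 hb
  have σ : Fin j ≃ Σ i, Fin (s i) := Fintype.equivOfCardEq (by simp [hs2])
  set c : Fin j → Fin q × ℕ := fun l => ((σ l).1, ((σ l).2 : ℕ)) with hc
  have hcζ : (∏ l, ξ (c l).1) = ζ := by
    rw [← hs3, Fintype.prod_equiv σ (fun l => ξ (c l).1) (fun p => ξ p.1) (fun l => rfl),
      Fintype.prod_sigma]
    simp
  have hcw : JBw m c = K := by
    rw [JBw, Fintype.sum_equiv σ (fun l => ((m (c l).1 : ℤ) - 1 - 2 * ((c l).2 : ℤ)))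
      (fun p => ((m p.1 : ℤ) - 1 - 2 * ((p.2 : ℕ) : ℤ))) (fun l => rfl),
      Fintype.sum_sigma, hK, Nat.cast_sum]
    apply Finset.sum_congr rfl
    intro i _
    have : ∀ n : ℕ, ∑ y : Fin n, ((m i : ℤ) - 1 - 2 * ((y : ℕ) : ℤ)) = n * (m i - n) := by
      intro n
      rw [Fin.sum_univ_eq_sum_range (fun y => ((m i : ℤ) - 1 - 2 * (y : ℤ))) n]
      induction n with
      | zero => simp
      | succ n ih => rw [Finset.sum_range_succ, ih]; push_cast; ring
    rw [this]
    push_cast [Nat.cast_sub (hs1 i)]; ring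
  set v := ιMulti F j (fun l => E (c l)) with hv
  have hv0 : v ≠ 0 := by
    apply JB_wedge_ne_zero
    have h1 : (fun l => E (c l)) =
        b ∘ (fun l => (⟨(σ l).1, Fin.castLE (hs1 _) (σ l).2⟩ : Σ i, Fin (m i))) := by
      ext l; simp [hb, hc]
    rw [h1]
    apply b.linearIndependent.comp
    intro l l' hl
    apply σ.injective
    simp only at hl
    generalize σ l = p at hl
    generalize σ l' = p' at hl
    obtain ⟨i, a⟩ := p
    obtain ⟨i', a'⟩ := p'
    obtain ⟨rfl, hl⟩ := Sigma.mk.inj_iff.1 hl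
    have hl2 := Fin.castLE_injective _ (eq_of_heq hl)
    exact congrArg (Sigma.mk i) hl2
  have hev : JBd j e v = 0 := by
    rw [hv, JBd_apply]
    apply Finset.sum_eq_zero
    intro l _
    rcases Nat.eq_zero_or_pos (c l).2 with h0 | h0
    · apply AlternatingMap.map_coord_zero _ l
      have := he (c l).1 (c l).2
      simp only [Prod.mk.eta] at this
      rw [Function.update_self, this, h0, Nat.cast_zero, zero_mul, zero_smul]
    · have := he (c l).1 (c l).2
      simp only [Prod.mk.eta] at this
      rw [this, AlternatingMap.map_update_smul]
      have hlt : (c l).2 - 1 < s (c l).1 := by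
        have : (c l).2 < s (c l).1 := (σ l).2.2
        omega
      set l' := σ.symm ⟨(c l).1, ⟨(c l).2 - 1, hlt⟩⟩ with hl'
      have hcl' : c l' = ((c l).1, (c l).2 - 1) := by
        have hσ : σ l' = ⟨(c l).1, ⟨(c l).2 - 1, hlt⟩⟩ := σ.apply_symm_apply _
        change ((σ l').1, ((σ l').2 : ℕ)) = _
        rw [hσ]
      have hne : l ≠ l' := by
        intro h
        rw [← h] at hcl'
        have := congrArg Prod.snd hcl'
        simp only at this
        omega
      rw [AlternatingMap.map_eq_zero_of_eq _ _ (i := l) (j := l') _ hne, smul_zero]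
      rw [Function.update_self, Function.update_of_ne hne.symm, hcl']
  have hhv : JBd j h v = (K : F) • v := by
    rw [hv, JBd_apply]
    have : ∀ l, ιMulti F j (Function.update (fun l => E (c l)) l (h (E (c l)))) =
        (((m (c l).1 : F) - 1 - 2 * ((c l).2 : F))) • v := by
      intro l
      have := hh (c l).1 (c l).2
      simp only [Prod.mk.eta] at this
      rw [this, AlternatingMap.map_update_smul, Function.update_eq_self]
    rw [Finset.sum_congr rfl (fun l _ => this l), ← Finset.sum_smul]
    congr 1
    have := congrArg (Int.cast : ℤ → F) hcw
    simpa [JBw] using this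
  have hfK := JB_sl2 (JBd j e) (JBd j f) (JBd j h) (JBd_comm j e f h hef)
    (fun y => by rw [JBd_comm j h f _ hhf y, JBd_smul j f ((-2 : F) • f) (-2) (fun x => rfl)])
    v hv0 K hev hhv K le_rfl
  have hvG : v ∈ JBG j m ξ E ζ K := JB_mem_G c hcζ hcw.le
  have happ : ∀ k : ℕ, ((Mj - ζ • LinearMap.id : ⋀[F]^j V →ₗ[F] ⋀[F]^j V) ^ k) v
      - ζ ^ k • ((JBd j f) ^ k) v ∈ JBG j m ξ E ζ ((K : ℤ) - 2 * k - 2) := by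
    intro k
    induction k with
    | zero => simp
    | succ k ih =>
      set T := (Mj - ζ • LinearMap.id : ⋀[F]^j V →ₗ[F] ⋀[F]^j V) with hT
      have h1 := JB_T_G (m := m) M hE Mj hMj ζ _ _ ih
      have h2 := JB_Tf_G (m := m) M hE f hf Mj hMj ζ _ _
        (JB_pow_G (JBd j f) (JB_df_G f hf) _ k v hvG)
      have h3 := Submodule.add_mem _ h1 (Submodule.smul_mem _ (ζ ^ k)
        (JBG_mono (show (K : ℤ) - 2 * k - 4 ≤ (K : ℤ) - 2 * k - 2 - 2 by omega) h2))
      have h4 : (K : ℤ) - 2 * k - 2 - 2 = (K : ℤ) - 2 * (k + 1 : ℕ) - 2 := by push_cast; ring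
      rw [h4] at h3
      convert h3 using 1
      rw [← hT, pow_succ' T, pow_succ' (JBd j f), Module.End.mul_apply, Module.End.mul_apply,
        map_sub, map_smul, LinearMap.sub_apply T, LinearMap.smul_apply, pow_succ, mul_smul,
        smul_sub]
      abel
  have hN : sSup (JBset j m ξ ζ) = K + 1 := by rw [hs4, add_comm]
  refine ⟨K, v, hN, ?_, ?_⟩
  · have h1 := happ K
    rw [JBG_bot ξ hE0 ζ _ (by rw [hN]; push_cast; omega), Submodule.mem_bot, sub_eq_zero] at h1
    rw [h1]
    refine smul_ne_zero (pow_ne_zero _ ?_) hfK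
    rw [← hcζ]
    exact Finset.prod_ne_zero_iff.2 fun l _ => hξ _
  · have := JB_kill (m := m) M hE hE0 Mj hMj ζ v (by rw [hN]; simpa using hvG)
    rwa [hN] at this

lemma JB_gen {F V : Type*} [Field F] [AddCommGroup V] [Module F V] {q : ℕ} {j : ℕ}
    {m : Fin q → ℕ} {ξ : Fin q → F} {E : Fin q × ℕ → V} (M : V →ₗ[F] V)
    (b : Module.Basis (Σ i, Fin (m i)) F V)
    (hE : ∀ i a, M (E (i, a)) = ξ i • (E (i, a) + E (i, a + 1)))
    (hE0 : ∀ i a, m i ≤ a → E (i, a) = 0) (hb : ∀ p, b p = E (p.1, p.2))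
    (Mj : ⋀[F]^j V →ₗ[F] ⋀[F]^j V)
    (hMj : ∀ v : Fin j → V, Mj (ιMulti F j v) = ιMulti F j fun k => M (v k)) (ζ : F)
    (z : ⋀[F]^j V) (k : ℕ)
    (hz : ((Mj - ζ • LinearMap.id : ⋀[F]^j V →ₗ[F] ⋀[F]^j V) ^ k) z = 0) :
    ((Mj - ζ • LinearMap.id : ⋀[F]^j V →ₗ[F] ⋀[F]^j V) ^ (sSup (JBset j m ξ ζ))) z = 0 := by
  set H : F → Submodule F (⋀[F]^j V) := fun ζ => JBG j m ξ E ζ ((sSup (JBset j m ξ ζ) : ℕ) - 1)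
    with hH
  have hle : ∀ ζ, H ζ ≤ Module.End.maxGenEigenspace Mj ζ := by
    intro ζ' y hy
    rw [Module.End.mem_maxGenEigenspace]
    exact ⟨_, JB_kill M hE hE0 Mj hMj ζ' y hy⟩
  have htop : (⊤ : Submodule F (⋀[F]^j V)) ≤ H ζ ⊔ ⨆ (ζ' : F) (_ : ζ' ≠ ζ), H ζ' := by
    have hsp : Submodule.span F (Set.range E) = ⊤ := by
      rw [eq_top_iff, ← b.span_eq]
      apply Submodule.span_mono
      rintro _ ⟨p, rfl⟩
      exact ⟨_, (hb p).symm⟩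
    rw [← ιMulti_span_of_span F j V hsp, Submodule.span_le]
    rintro _ ⟨w, hw, rfl⟩
    have hw' : ∀ l, ∃ p, E p = w l := fun l => hw ⟨l, rfl⟩
    choose c hc using hw'
    have hcw : w = fun l => E (c l) := by ext l; rw [hc]
    rw [hcw]
    have h1 := JBG_top (F := F) (m := m) ξ hE0 c
    by_cases h : (∏ l, ξ (c l).1) = ζ
    · rw [h] at h1
      exact Submodule.mem_sup_left h1
    · exact Submodule.mem_sup_right (Submodule.mem_iSup_of_mem _ (Submodule.mem_iSup_of_mem h h1))
  obtain ⟨y, hy, u, hu, hyu⟩ := Submodule.mem_sup.1 (htop (Submodule.mem_top (x := z)))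
  have hzg : z ∈ Module.End.maxGenEigenspace Mj ζ := by
    rw [Module.End.mem_maxGenEigenspace]
    exact ⟨k, hz⟩
  have hu1 : u ∈ Module.End.maxGenEigenspace Mj ζ := by
    have : u = z - y := by rw [← hyu]; abel
    rw [this]
    exact Submodule.sub_mem _ hzg (hle ζ hy)
  have hu2 : u ∈ ⨆ (ζ' : F) (_ : ζ' ≠ ζ), Module.End.maxGenEigenspace Mj ζ' :=
    (iSup₂_mono fun ζ' _ => hle ζ') hu
  have hu0 : u = 0 := by
    have := (Module.End.independent_maxGenEigenspace Mj) ζ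
    exact Submodule.disjoint_def.1 this u hu1 hu2
  rw [hu0, add_zero] at hyu
  rw [← hyu]
  exact JB_kill M hE hE0 Mj hMj ζ y hy


/-- Let `F` be an algebraically closed field of characteristic zero, `V ≠ 0` a finite
dimensional `F`-vector space, and `M` an automorphism of `V`. Suppose `V = V₁ ⊕ ⋯ ⊕ V_q`
with each `V_i` stable under `M` and the restriction of `M` to `V_i` a single Jordan block
of size `m_i = dim V_i` with eigenvalue `ξ_i ∈ Fˣ`. Fix `j > 0` and let `∧^j M` be the
induced endomorphism `Mj` of `⋀^j V`. For `ζ ∈ F`, the maximal rank `max_ζ` of a Jordan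
block of `∧^j M` with eigenvalue `ζ` (the smallest `k` with
`ker ((∧^j M - ζ·id) ^ (k+1)) = ker ((∧^j M - ζ·id) ^ k)`) equals
`max {1 + Σ_i s_i (m_i - s_i) | s ∈ ℕ^q, Σ s_i = j, s_i ≤ m_i, Π ξ_i ^ s_i = ζ}`,
with the convention `max ∅ = 0`. -/
theorem maximal_jordan_block_exteriorPower
    (F V : Type*) [Field F] [IsAlgClosed F] [CharZero F]
    [AddCommGroup V] [Module F V] [FiniteDimensional F V] [Nontrivial V]
    (M : V →ₗ[F] V) (hMbij : Function.Bijective M)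
    (q : ℕ) (Vsub : Fin q → Submodule F V) (hdec : DirectSum.IsInternal Vsub)
    (m : Fin q → ℕ) (ξ : Fin q → F) (hξ : ∀ i, ξ i ≠ 0)
    (hdim : ∀ i, Module.finrank F (Vsub i) = m i)
    (hstab : ∀ i, ∀ x ∈ Vsub i, M x ∈ Vsub i)
    (hjb : ∀ i, ∀ x ∈ Vsub i, (((M - ξ i • LinearMap.id : V →ₗ[F] V)) ^ m i) x = 0)
    (hjb' : ∀ i, ∃ x ∈ Vsub i, (((M - ξ i • LinearMap.id : V →ₗ[F] V)) ^ (m i - 1)) x ≠ 0)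
    (j : ℕ) (hj : 0 < j)
    (Mj : ⋀[F]^j V →ₗ[F] ⋀[F]^j V)
    (hMj : ∀ v : Fin j → V, Mj (wedge F j v) = wedge F j fun k => M (v k))
    (ζ : F) (maxζ : ℕ)
    (hmax : IsLeast {k : ℕ |
      LinearMap.ker ((Mj - ζ • LinearMap.id) ^ (k + 1)) =
        LinearMap.ker ((Mj - ζ • LinearMap.id) ^ k)} maxζ) :
    maxζ = sSup {n : ℕ | ∃ s : Fin q → ℕ, (∀ i, s i ≤ m i) ∧ (∑ i, s i) = j ∧
      (∏ i, ξ i ^ s i) = ζ ∧ n = 1 + ∑ i, s i * (m i - s i)} := by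
  obtain ⟨E, b, hE, hE0, hb⟩ := JB_exists_chain F V M q Vsub hdec m ξ hξ hdim hstab hjb hjb'
  have hMj' : ∀ v : Fin j → V, Mj (ιMulti F j v) = ιMulti F j fun k => M (v k) := hMj
  change maxζ = sSup (JBset j m ξ ζ)
  set T := (Mj - ζ • LinearMap.id : ⋀[F]^j V →ₗ[F] ⋀[F]^j V) with hT
  have hup : maxζ ≤ sSup (JBset j m ξ ζ) := by
    apply hmax.2
    apply le_antisymm
    · intro z hz
      exact JB_gen M b hE hE0 hb Mj hMj' ζ z _ hz
    · intro z hz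
      rw [LinearMap.mem_ker] at hz ⊢
      rw [pow_succ', Module.End.mul_apply, hz, map_zero]
  apply le_antisymm hup
  by_cases hne : (JBset j m ξ ζ).Nonempty
  · obtain ⟨K, v, hN, h1, h2⟩ := JB_lower hξ M b hE hE0 hb Mj hMj' ζ hne
    rw [hN]
    by_contra hlt
    push Not at hlt
    have hst := Module.End.ker_pow_constant (hmax.1 : _ = _).symm
    have e1 := hst (K - maxζ)
    have e2 := hst (K + 1 - maxζ)
    rw [show maxζ + (K - maxζ) = K by omega] at e1
    rw [show maxζ + (K + 1 - maxζ) = K + 1 by omega] at e2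
    have h3 : v ∈ LinearMap.ker (T ^ (K + 1)) := h2
    rw [← e2, e1] at h3
    exact h1 h3
  · rw [Set.not_nonempty_iff_eq_empty] at hne
    rw [hne]; simp
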